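/- arXiv:math/0210439 — 2 statements merged into one kernel-verified Lean document; each statement's English description precedes it below -/
import Mathlib

section
/- Let D be a triangulated category and let a_m →^{d_m} a_{m-1} → ... → a_1 →^{d_1} a_0 be a bounded complex of objects of D (i.e. d_i ∘ d_{i+1} = 0 for 1 ≤ i < m) satisfying Hom_D(a_p[r], a_q) = 0 for all p > q and all r > 0. Then there exists a left convolution d : a → a_m of this complex, and the pair (a, d) is uniquely determined up to isomorphism. -/
/-!
Statement 2.

Let `D` be a triangulated category and `a_m →^{d_m} a_{m-1} → ... → a_1 →^{d_1} a_0` a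
bounded complex of objects (`d_i ∘ d_{i+1} = 0` for `1 ≤ i < m`) satisfying
`Hom_D(a_p[r], a_q) = 0` for all `p > q`, `r > 0`.  Then there exists a left convolution
`d : a → a_m` of this complex, and the pair `(a, d)` is uniquely determined up to
isomorphism.

The complex is encoded with its natural *bottom-up* indexing: `a p` is the object `a_p`
and `d p : a (p+1) ⟶ a p` is the differential `d_{p+1}`.  The inductive predicate
`IsLeftConvolution m a d c e` expresses that `e : c ⟶ a m` is a left convolution,
following exactly the inductive construction of the paper: for `m = 0`, `a = a_0` and
`d = Id`; for `m ≥ 1` one chooses a distinguished triangle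
`a'_1 →^{j_1} a_1 →^{d_1} a_0 → a'_1[1]`, a morphism `d'_2 : a_2 → a'_1` with
`j_1 ∘ d'_2 = d_2`, and takes a left convolution of the shorter complex
`a_m → ... → a_2 →^{d'_2} a'_1`.
-/

open CategoryTheory CategoryTheory.Limits CategoryTheory.Pretriangulated

universe v u

variable {D : Type u} [Category.{v} D] [HasZeroObject D] [HasShift D ℤ]
  [Preadditive D] [∀ n : ℤ, (CategoryTheory.shiftFunctor D n).Additive] [Pretriangulated D]

/-- The objects of the complex obtained by replacing the two bottom terms `a_1 → a_0` of
the complex `a` by the object `x` (= `a'_1`). -/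
def truncObj (a : ℕ → D) (x : D) : ℕ → D
  | 0 => x
  | k + 1 => a (k + 2)

/-- The differentials of the shortened complex: the new bottom differential is the induced
morphism `d₂ : a 2 ⟶ x`, and the remaining differentials are unchanged. -/
def truncMap (a : ℕ → D) (d : ∀ i, a (i + 1) ⟶ a i) (x : D) (d₂ : a 2 ⟶ x) :
    ∀ i, truncObj a x (i + 1) ⟶ truncObj a x i
  | 0 => d₂
  | k + 1 => d (k + 2)

/-- `IsLeftConvolution m a d c e` : the morphism `e : c ⟶ a m` (to the top object `a_m` of
the complex) is a left convolution of the length-`m` complex with objects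
`a 0, ..., a m` and differentials `d p : a (p+1) ⟶ a p`. -/
inductive IsLeftConvolution :
    ∀ (m : ℕ) (a : ℕ → D) (_ : ∀ i, a (i + 1) ⟶ a i) (c : D), (c ⟶ a m) → Prop
  | zero (a : ℕ → D) (d : ∀ i, a (i + 1) ⟶ a i) :
      IsLeftConvolution 0 a d (a 0) (𝟙 (a 0))
  | one (a : ℕ → D) (d : ∀ i, a (i + 1) ⟶ a i) (x : D) (j : x ⟶ a 1)
      (δ : a 0 ⟶ x⟦(1 : ℤ)⟧)
      (_ : Triangle.mk j (d 0) δ ∈ distTriang D) :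
      IsLeftConvolution 1 a d x j
  | step (m : ℕ) (a : ℕ → D) (d : ∀ i, a (i + 1) ⟶ a i) (x : D) (j : x ⟶ a 1)
      (δ : a 0 ⟶ x⟦(1 : ℤ)⟧)
      (_ : Triangle.mk j (d 0) δ ∈ distTriang D)
      (d₂ : a 2 ⟶ x) (_ : d₂ ≫ j = d 1)
      (c : D) (e : c ⟶ a (m + 2))
      (_ : IsLeftConvolution (m + 1) (truncObj a x) (truncMap a d x d₂) c e) :
      IsLeftConvolution (m + 2) a d c e

theorem lc_mono_aux {x y z Y : D} {j : x ⟶ y} {g : y ⟶ z} {δ : z ⟶ x⟦(1 : ℤ)⟧}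
    (hT : Triangle.mk j g δ ∈ distTriang D)
    (hz : ∀ f : Y⟦(1 : ℤ)⟧ ⟶ z, f = 0) (f : Y ⟶ x) (hf : f ≫ j = 0) : f = 0 := by
  obtain ⟨k, hk⟩ := Triangle.coyoneda_exact₁ _ hT (f⟦(1 : ℤ)⟧') (by
    change (shiftFunctor D (1 : ℤ)).map f ≫ (shiftFunctor D (1 : ℤ)).map j = 0
    rw [← Functor.map_comp, hf, Functor.map_zero])
  have hk0 : k = 0 := hz k
  apply (shiftFunctor D (1 : ℤ)).map_injective
  rw [Functor.map_zero]
  refine hk.trans ?_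
  rw [hk0]
  exact zero_comp

theorem lc_shift_zero {Y z : D} (r : ℤ) (h : ∀ f : Y⟦r + 1⟧ ⟶ z, f = 0)
    (f : Y⟦r⟧⟦(1 : ℤ)⟧ ⟶ z) : f = 0 := by
  have := h ((shiftFunctorAdd D r 1).hom.app Y ≫ f)
  rw [← cancel_epi ((shiftFunctorAdd D r 1).hom.app Y)]
  rw [comp_zero]; exact this

theorem lc_trunc_vanish (m : ℕ) (a : ℕ → D) (d : ∀ i, a (i + 1) ⟶ a i)
    (hvanish : ∀ p q, q < p → p ≤ m + 2 → ∀ r : ℤ, 0 < r →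
      ∀ f : (a p)⟦r⟧ ⟶ a q, f = 0)
    (x : D) (j : x ⟶ a 1) (δ : a 0 ⟶ x⟦(1 : ℤ)⟧)
    (hT : Triangle.mk j (d 0) δ ∈ distTriang D) :
    ∀ p q, q < p → p ≤ m + 1 → ∀ r : ℤ, 0 < r →
      ∀ f : (truncObj a x p)⟦r⟧ ⟶ truncObj a x q, f = 0 := by
  intro p q hqp hp r hr f
  obtain _ | p := p
  · omega
  obtain _ | q := q
  · exact lc_mono_aux hT (lc_shift_zero r
      (hvanish (p + 2) 0 (by omega) (by omega) (r + 1) (by omega))) f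
      (hvanish (p + 2) 1 (by omega) (by omega) r hr _)
  · exact hvanish (p + 2) (q + 2) (by omega) (by omega) r hr f

theorem lc_trunc_complex (m : ℕ) (a : ℕ → D) (d : ∀ i, a (i + 1) ⟶ a i)
    (hcomplex : ∀ i, i + 2 ≤ m + 2 → d (i + 1) ≫ d i = 0)
    (hvanish : ∀ p q, q < p → p ≤ m + 2 → ∀ r : ℤ, 0 < r →
      ∀ f : (a p)⟦r⟧ ⟶ a q, f = 0)
    (x : D) (j : x ⟶ a 1) (δ : a 0 ⟶ x⟦(1 : ℤ)⟧)
    (hT : Triangle.mk j (d 0) δ ∈ distTriang D) (d₂ : a 2 ⟶ x) (h₂ : d₂ ≫ j = d 1) :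
    ∀ i, i + 2 ≤ m + 1 → truncMap a d x d₂ (i + 1) ≫ truncMap a d x d₂ i = 0 := by
  intro i hi
  obtain _ | i := i
  · refine lc_mono_aux hT (hvanish 3 0 (by omega) (by omega) 1 (by omega)) (d 2 ≫ d₂) ?_
    rw [Category.assoc, h₂]
    exact hcomplex 1 (by omega)
  · exact hcomplex (i + 2) (by omega)

theorem lc_exists (m : ℕ) : ∀ (a : ℕ → D) (d : ∀ i, a (i + 1) ⟶ a i)
    (_ : ∀ i, i + 2 ≤ m → d (i + 1) ≫ d i = 0)
    (_ : ∀ p q, q < p → p ≤ m → ∀ r : ℤ, 0 < r →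
      ∀ f : (a p)⟦r⟧ ⟶ a q, f = 0),
    ∃ (c : D) (e : c ⟶ a m), IsLeftConvolution m a d c e := by
  induction m with
  | zero => exact fun a d _ _ => ⟨_, _, .zero a d⟩
  | succ m ih =>
    intro a d hc hv
    obtain ⟨x, j, δ, hT⟩ := distinguished_cocone_triangle₁ (d 0)
    obtain _ | m := m
    · exact ⟨_, _, .one a d x j δ hT⟩
    · obtain ⟨d₂, h₂⟩ := Triangle.coyoneda_exact₂ _ hT (d 1) (hc 0 (by omega))
      obtain ⟨c, e, h⟩ := ih (truncObj a x) (truncMap a d x d₂)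
        (lc_trunc_complex m a d hc hv x j δ hT d₂ h₂.symm)
        (lc_trunc_vanish m a d hv x j δ hT)
      exact ⟨c, e, .step m a d x j δ hT d₂ h₂.symm c e h⟩

/-- Isomorphisms between truncated complexes. -/
def lcTruncIso {a a' : ℕ → D} (f : ∀ i, a i ≅ a' i) {x x' : D} (g : x ≅ x') :
    ∀ i, truncObj a x i ≅ truncObj a' x' i
  | 0 => g
  | k + 1 => f (k + 2)

theorem lc_triangle_iso {x y z x' y' z' : D} {j : x ⟶ y} {g : y ⟶ z} {δ : z ⟶ x⟦(1 : ℤ)⟧}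
    (hT : Triangle.mk j g δ ∈ distTriang D)
    {j' : x' ⟶ y'} {g' : y' ⟶ z'} {δ' : z' ⟶ x'⟦(1 : ℤ)⟧}
    (hT' : Triangle.mk j' g' δ' ∈ distTriang D)
    (b : y ≅ y') (c : z ≅ z') (comm : g ≫ c.hom = b.hom ≫ g') :
    ∃ φ : x ≅ x', φ.hom ≫ j' = j ≫ b.hom := by
  obtain ⟨k, hk1, hk2⟩ := complete_distinguished_triangle_morphism₁ _ _ hT hT' b.hom c.hom comm
  let F : Triangle.mk j g δ ⟶ Triangle.mk j' g' δ' :=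
    { hom₁ := k, hom₂ := b.hom, hom₃ := c.hom, comm₁ := hk1, comm₂ := comm, comm₃ := hk2 }
  have hI : IsIso F.hom₁ := isIso₁_of_isIso₂₃ F hT hT'
    (inferInstanceAs (IsIso b.hom)) (inferInstanceAs (IsIso c.hom))
  exact ⟨@asIso _ _ x x' k hI, hk1.symm⟩

theorem lc_unique (m : ℕ) : ∀ (a a' : ℕ → D) (d : ∀ i, a (i + 1) ⟶ a i)
    (d' : ∀ i, a' (i + 1) ⟶ a' i)
    (f : ∀ i, a i ≅ a' i)
    (_ : ∀ i, i + 1 ≤ m → d i ≫ (f i).hom = (f (i + 1)).hom ≫ d' i)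
    (_ : ∀ p q, q < p → p ≤ m → ∀ r : ℤ, 0 < r →
      ∀ f : (a p)⟦r⟧ ⟶ a q, f = 0)
    (_ : ∀ p q, q < p → p ≤ m → ∀ r : ℤ, 0 < r →
      ∀ f : (a' p)⟦r⟧ ⟶ a' q, f = 0)
    (c₁ c₂ : D) (e₁ : c₁ ⟶ a m) (e₂ : c₂ ⟶ a' m),
      IsLeftConvolution m a d c₁ e₁ → IsLeftConvolution m a' d' c₂ e₂ →
      ∃ φ : c₁ ≅ c₂, φ.hom ≫ e₂ = e₁ ≫ (f m).hom := by
  induction m with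
  | zero =>
    intro a a' d d' f _ _ _ c₁ c₂ e₁ e₂ h₁ h₂
    cases h₁
    cases h₂
    exact ⟨f 0, by simp⟩
  | succ m ih =>
    intro a a' d d' f hf hv hv' c₁ c₂ e₁ e₂ h₁ h₂
    obtain _ | m := m
    · cases h₁ with
      | one _ _ _ _ δ hT =>
      cases h₂ with
      | one _ _ _ _ δ' hT' =>
      exact lc_triangle_iso hT hT' (f 1) (f 0) (hf 0 (by omega))
    · cases h₁ with
      | step _ _ _ x j δ hT d₂ hd₂ _ _ h₁ =>
      cases h₂ with
      | step _ _ _ x' j' δ' hT' d₂' hd₂' _ _ h₂ =>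
      obtain ⟨g, hg⟩ := lc_triangle_iso hT hT' (f 1) (f 0) (hf 0 (by omega))
      have hv0 : ∀ k : (a 2)⟦(1 : ℤ)⟧ ⟶ a' 0, k = 0 := fun k => by
        have := hv 2 0 (by omega) (by omega) 1 (by omega) (k ≫ (f 0).inv)
        rw [← cancel_mono (f 0).inv, this, zero_comp]
      have key : d₂ ≫ g.hom = (f 2).hom ≫ d₂' := by
        rw [← sub_eq_zero]
        refine lc_mono_aux hT' hv0 _ ?_
        have := hf 1 (by omega)
        rw [Preadditive.sub_comp, Category.assoc, Category.assoc, hg, hd₂', reassoc_of% hd₂,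
          this, sub_self]
      exact ih (truncObj a x) (truncObj a' x') (truncMap a d x d₂) (truncMap a' d' x' d₂')
        (lcTruncIso f g)
        (fun i hi => by
          obtain _ | i := i
          · exact key
          · exact hf (i + 2) (by omega))
        (lc_trunc_vanish m a d hv x j δ hT)
        (lc_trunc_vanish m a' d' hv' x' j' δ' hT') c₁ c₂ e₁ e₂ h₁ h₂

/-- A bounded complex `a_m → ... → a_0` in a triangulated category with
`Hom(a_p[r], a_q) = 0` for `p > q`, `r > 0` admits a left convolution `d : a → a_m`,
unique up to isomorphism (compatibly with `d`). -/
theorem left_convolution_exists_and_unique_up_to_iso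
    (m : ℕ) (a : ℕ → D) (d : ∀ i, a (i + 1) ⟶ a i)
    (hcomplex : ∀ i, i + 2 ≤ m → d (i + 1) ≫ d i = 0)
    (hvanish : ∀ p q, q < p → p ≤ m → ∀ r : ℤ, 0 < r →
      ∀ f : (a p)⟦r⟧ ⟶ a q, f = 0) :
    (∃ (c : D) (e : c ⟶ a m), IsLeftConvolution m a d c e) ∧
    (∀ (c₁ c₂ : D) (e₁ : c₁ ⟶ a m) (e₂ : c₂ ⟶ a m),
      IsLeftConvolution m a d c₁ e₁ → IsLeftConvolution m a d c₂ e₂ →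
      ∃ φ : c₁ ≅ c₂, φ.hom ≫ e₂ = e₁) := by
  refine ⟨lc_exists m a d hcomplex hvanish, fun c₁ c₂ e₁ e₂ h₁ h₂ => ?_⟩
  obtain ⟨φ, hφ⟩ := lc_unique m a a d d (fun i => Iso.refl _) (by simp) hvanish hvanish
    c₁ c₂ e₁ e₂ h₁ h₂
  exact ⟨φ, by simpa using hφ⟩
end

section
/- Let D be a triangulated category and let f_• : (a_•, d_•) → (b_•, e_•) be a morphism between two bounded complexes a_m → ... → a_0 and b_m → ... → b_0 in D, each satisfying Hom_D(a_p[r], a_q) = 0 and Hom_D(b_p[r], b_q) = 0 for p > q, r > 0. Let d : a → a_m and e : b → b_m be left convolutions of these complexes and let ε : a' → a be a morphism. Assume in addition that Hom_D(a_p[r], b_q) = 0 for all p > q and r > 0. Then there exists a morphism f : a' → b with e ∘ f = f_m ∘ d ∘ ε. Moreover, f is unique with this property if Hom_D(a'[r], b_q) = 0 for all q and all r > 0. -/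
/-!
Statement 3.

Let `f_• : (a_•, d_•) → (b_•, e_•)` be a morphism between two bounded complexes
`a_m → ... → a_0` and `b_m → ... → b_0` in a triangulated category `D`, each satisfying
the vanishing `Hom(a_p[r], a_q) = 0` resp. `Hom(b_p[r], b_q) = 0` for `p > q`, `r > 0`.
Let `d : a → a_m` and `e : b → b_m` be left convolutions and `ε : a' → a` a morphism.
If moreover `Hom(a_p[r], b_q) = 0` for `p > q`, `r > 0`, then there is `f : a' → b` with
`e ∘ f = f_m ∘ d ∘ ε`; it is unique with this property if `Hom(a'[r], b_q) = 0` for all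
`q` and `r > 0`.

Complexes are encoded with *bottom-up* indexing: `a p` is `a_p` and
`da p : a (p+1) ⟶ a p` is the differential `d_{p+1}`; a morphism of complexes is a family
`f p : a p ⟶ b p` with `e_p ∘ f_p = f_{p-1} ∘ d_p`.  The predicate `IsLeftConvolution`
follows the inductive construction of left convolutions from the paper.
-/

open CategoryTheory CategoryTheory.Limits CategoryTheory.Pretriangulated

universe v u

variable {D : Type u} [Category.{v} D] [HasZeroObject D] [HasShift D ℤ]
  [Preadditive D] [∀ n : ℤ, (CategoryTheory.shiftFunctor D n).Additive] [Pretriangulated D]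

theorem aux_zero {x b₁ b₀ c : D} (j : x ⟶ b₁) (d : b₁ ⟶ b₀) (δ : b₀ ⟶ x⟦(1 : ℤ)⟧)
    (hT : Triangle.mk j d δ ∈ distTriang D)
    (hc : ∀ g : c⟦(1 : ℤ)⟧ ⟶ b₀, g = 0) (u : c ⟶ x) (hu : u ≫ j = 0) : u = 0 := by
  obtain ⟨g, hg⟩ := Triangle.coyoneda_exact₁ _ hT (u⟦(1 : ℤ)⟧') (by
    change u⟦(1 : ℤ)⟧' ≫ j⟦(1 : ℤ)⟧' = 0
    rw [← Functor.map_comp, hu, Functor.map_zero])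
  have h0 : g = 0 := hc g
  rw [h0, zero_comp] at hg
  apply (shiftFunctor D (1 : ℤ)).map_injective
  rw [Functor.map_zero]
  exact hg

theorem aux_vanish {x b₁ b₀ c : D} (j : x ⟶ b₁) (d : b₁ ⟶ b₀) (δ : b₀ ⟶ x⟦(1 : ℤ)⟧)
    (hT : Triangle.mk j d δ ∈ distTriang D)
    (h₁ : ∀ r : ℤ, 0 < r → ∀ g : c⟦r⟧ ⟶ b₁, g = 0)
    (h₀ : ∀ r : ℤ, 0 < r → ∀ g : c⟦r⟧ ⟶ b₀, g = 0)
    (r : ℤ) (hr : 0 < r) (u : c⟦r⟧ ⟶ x) : u = 0 := by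
  refine aux_zero j d δ hT (fun g => ?_) u (h₁ r hr _)
  have := h₀ (r + 1) (by omega) ((shiftFunctorAdd D r (1 : ℤ)).hom.app c ≫ g)
  rw [← cancel_epi ((shiftFunctorAdd D r (1 : ℤ)).hom.app c), this, comp_zero]

theorem aux_one {x b₁ b₀ c : D} (h₀ : ∀ r : ℤ, 0 < r → ∀ g : c⟦r⟧ ⟶ b₀, g = 0)
    (j : x ⟶ b₁) (d : b₁ ⟶ b₀) (δ : b₀ ⟶ x⟦(1 : ℤ)⟧)
    (hT : Triangle.mk j d δ ∈ distTriang D) (u v : c ⟶ x) (h : u ≫ j = v ≫ j) : u = v := by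
  rw [← sub_eq_zero]
  refine aux_zero j d δ hT (h₀ 1 (by omega)) _ ?_
  rw [Preadditive.sub_comp, h, sub_self]

def truncHom {a b : ℕ → D} {x y : D} (f : ∀ p, a p ⟶ b p) (g : x ⟶ y) :
    ∀ p, truncObj a x p ⟶ truncObj b y p
  | 0 => g
  | k + 1 => f (k + 2)

theorem aux_main (a' : D)
    (m : ℕ) : ∀ (a : ℕ → D) (da : ∀ i, a (i + 1) ⟶ a i)
    (b : ℕ → D) (db : ∀ i, b (i + 1) ⟶ b i)
    (f : ∀ p, a p ⟶ b p)
    (_ : ∀ p, p < m → da p ≫ f p = f (p + 1) ≫ db p)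
    (ca cb : D) (dconv : ca ⟶ a m) (econv : cb ⟶ b m)
    (_ : IsLeftConvolution m a da ca dconv) (_ : IsLeftConvolution m b db cb econv)
    (ε : a' ⟶ ca)
    (_ : ∀ p q, q < p → p ≤ m → ∀ r : ℤ, 0 < r → ∀ g : (a p)⟦r⟧ ⟶ b q, g = 0),
    (∃ φ : a' ⟶ cb, φ ≫ econv = ε ≫ dconv ≫ f m) ∧
    ((∀ q, q ≤ m → ∀ r : ℤ, 0 < r → ∀ g : a'⟦r⟧ ⟶ b q, g = 0) →
      ∀ φ₁ φ₂ : a' ⟶ cb, φ₁ ≫ econv = ε ≫ dconv ≫ f m →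
        φ₂ ≫ econv = ε ≫ dconv ≫ f m → φ₁ = φ₂) := by
  have key : ∀ {x y a₁ a₀ b₁ b₀ : D} (j : x ⟶ a₁) (d : a₁ ⟶ a₀) (δ : a₀ ⟶ x⟦(1 : ℤ)⟧)
      (_ : Triangle.mk j d δ ∈ distTriang D) (j' : y ⟶ b₁) (d' : b₁ ⟶ b₀)
      (δ' : b₀ ⟶ y⟦(1 : ℤ)⟧) (_ : Triangle.mk j' d' δ' ∈ distTriang D)
      (f₁ : a₁ ⟶ b₁) (f₀ : a₀ ⟶ b₀) (_ : d ≫ f₀ = f₁ ≫ d'),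
      ∃ g : x ⟶ y, g ≫ j' = j ≫ f₁ := by
    intro x y a₁ a₀ b₁ b₀ j d δ hT j' d' δ' hT' f₁ f₀ h
    obtain ⟨g, hg⟩ := Triangle.coyoneda_exact₂ _ hT' (j ≫ f₁) (by
      have := comp_distTriang_mor_zero₁₂ _ hT
      change j ≫ d = 0 at this
      change (j ≫ f₁) ≫ d' = 0
      rw [Category.assoc, ← h, reassoc_of% this, zero_comp])
    exact ⟨g, hg.symm⟩
  induction m with
  | zero =>
    intro a da b db f hf ca cb dconv econv hca hcb ε hv
    cases hca
    cases hcb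
    refine ⟨⟨ε ≫ f 0, by simp⟩, fun _ φ₁ φ₂ h₁ h₂ => ?_⟩
    rw [Category.comp_id] at h₁ h₂
    rw [h₁, h₂]
  | succ m ih =>
    intro a da b db f hf ca cb dconv econv hca hcb ε hv
    cases hca with
    | one _ _ _ _ δ hT =>
      cases hcb with
      | one _ _ _ _ δ' hT' =>
        obtain ⟨g, hg⟩ := key _ _ _ hT _ _ _ hT' (f 1) (f 0) (hf 0 (by omega))
        refine ⟨⟨ε ≫ g, by simp [hg]⟩, fun h φ₁ φ₂ h₁ h₂ => ?_⟩
        exact aux_one (h 0 (by omega)) _ _ _ hT' _ _ (h₁.trans h₂.symm)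
    | step m _ _ x j δ hT d₂ hd₂ _ _ hca =>
      cases hcb with
      | step _ _ _ y j' δ' hT' d₂' hd₂' _ _ hcb =>
        obtain ⟨g, hg⟩ := key _ _ _ hT _ _ _ hT' (f 1) (f 0) (hf 0 (by omega))
        have := ih (truncObj a x) (truncMap a da x d₂) (truncObj b y) (truncMap b db y d₂')
          (truncHom f g) (by
            rintro (_ | p) hp
            · change d₂ ≫ g = f 2 ≫ d₂'
              refine aux_one (hv 2 0 (by omega) (by omega)) _ _ _ hT' _ _ ?_
              rw [Category.assoc, Category.assoc, hg, hd₂', reassoc_of% hd₂]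
              exact hf 1 (by omega)
            · exact hf (p + 2) (by omega)) ca cb dconv econv hca hcb ε (by
            rintro (_ | p) (_ | q) hq hp
            · omega
            · omega
            · exact aux_vanish _ _ _ hT' (hv (p + 2) 1 (by omega) (by omega))
                (hv (p + 2) 0 (by omega) (by omega))
            · exact hv (p + 2) (q + 2) (by omega) (by omega))
        refine ⟨this.1, fun h => this.2 ?_⟩
        rintro (_ | q) hq
        · exact aux_vanish _ _ _ hT' (h 1 (by omega)) (h 0 (by omega))
        · exact h (q + 2) (by omega)

/-- Existence (and conditional uniqueness) of a morphism between left
convolutions induced by a morphism of complexes, after composition with `ε : a' ⟶ a`. -/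
theorem hom_of_left_convolutions
    (m : ℕ) (a : ℕ → D) (da : ∀ i, a (i + 1) ⟶ a i)
    (b : ℕ → D) (db : ∀ i, b (i + 1) ⟶ b i)
    (hcomplexa : ∀ i, i + 2 ≤ m → da (i + 1) ≫ da i = 0)
    (hcomplexb : ∀ i, i + 2 ≤ m → db (i + 1) ≫ db i = 0)
    (hvanisha : ∀ p q, q < p → p ≤ m → ∀ r : ℤ, 0 < r → ∀ f : (a p)⟦r⟧ ⟶ a q, f = 0)
    (hvanishb : ∀ p q, q < p → p ≤ m → ∀ r : ℤ, 0 < r → ∀ f : (b p)⟦r⟧ ⟶ b q, f = 0)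
    -- the morphism of complexes `f_•`
    (f : ∀ p, a p ⟶ b p)
    (hf : ∀ p, p < m → da p ≫ f p = f (p + 1) ≫ db p)
    -- the left convolutions `d : ca → a_m` and `e : cb → b_m`
    (ca cb : D) (dconv : ca ⟶ a m) (econv : cb ⟶ b m)
    (hca : IsLeftConvolution m a da ca dconv) (hcb : IsLeftConvolution m b db cb econv)
    -- a further morphism `ε : a' ⟶ ca`
    (a' : D) (ε : a' ⟶ ca)
    -- the additional vanishing `Hom(a_p[r], b_q) = 0` for `p > q`, `r > 0`
    (hvanishab : ∀ p q, q < p → p ≤ m → ∀ r : ℤ, 0 < r → ∀ g : (a p)⟦r⟧ ⟶ b q, g = 0) :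
    (∃ φ : a' ⟶ cb, φ ≫ econv = ε ≫ dconv ≫ f m) ∧
    ((∀ q, q ≤ m → ∀ r : ℤ, 0 < r → ∀ g : a'⟦r⟧ ⟶ b q, g = 0) →
      ∀ φ₁ φ₂ : a' ⟶ cb, φ₁ ≫ econv = ε ≫ dconv ≫ f m →
        φ₂ ≫ econv = ε ≫ dconv ≫ f m → φ₁ = φ₂) := by
  exact aux_main a' m a da b db f hf ca cb dconv econv hca hcb ε hvanishab
end
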